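/- For every real t ≥ 1 and all α, β ≥ 0 with α + β > 0, the inequality (t^{2α} − 1)(t^{2β} − 1) ≥ (4αβ/(α+β)²)(t^{α+β} − 1)² holds. -/

import Mathlib

/-!
Dividing by powers of `t` turns the three factors into hyperbolic sines: with `L = log t`,
`t ^ (2 * a) - 1 = 2 * t ^ a * sinh (a * L)`. The powers of `t` cancel, and the claim becomes
`(1 - w ^ 2) * sinh x ^ 2 ≤ sinh ((1 + w) * x) * sinh ((1 - w) * x)` for `x = (α + β) / 2 * L` and
`w = (α - β) / (α + β)`. The right-hand side equals `sinh x ^ 2 - sinh (w * x) ^ 2`, so this is the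
bound `|sinh (w * x)| ≤ |w| * |sinh x|` for `|w| ≤ 1`, which expresses the convexity of `sinh` on
`[0, ∞)`.
-/

open Real Set

lemma convexOn_sinh : ConvexOn ℝ (Ici 0) sinh := by
  refine MonotoneOn.convexOn_of_deriv (convex_Ici 0) continuous_sinh.continuousOn
    differentiable_sinh.differentiableOn ?_
  rw [Real.deriv_sinh, interior_Ici]
  exact cosh_strictMonoOn.monotoneOn.mono Ioi_subset_Ici_self

lemma sinh_mul_le {w x : ℝ} (hw₀ : 0 ≤ w) (hw₁ : w ≤ 1) (hx : 0 ≤ x) :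
    sinh (w * x) ≤ w * sinh x := by
  simpa using convexOn_sinh.2 hx self_mem_Ici hw₀ (sub_nonneg.2 hw₁) (add_sub_cancel w 1)

lemma abs_sinh_mul_le {w : ℝ} (hw : |w| ≤ 1) (x : ℝ) : |sinh (w * x)| ≤ |w| * |sinh x| := by
  rw [abs_sinh, abs_sinh, abs_mul]
  exact sinh_mul_le (abs_nonneg w) hw (abs_nonneg x)

lemma sinh_add_mul_sinh_sub (x y : ℝ) :
    sinh (x + y) * sinh (x - y) = sinh x ^ 2 - sinh y ^ 2 := by
  rw [sinh_add, sinh_sub]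
  linear_combination sinh x ^ 2 * cosh_sq y - sinh y ^ 2 * cosh_sq x

lemma one_sub_sq_mul_sinh_sq_le {w : ℝ} (hw : |w| ≤ 1) (x : ℝ) :
    (1 - w ^ 2) * sinh x ^ 2 ≤ sinh ((1 + w) * x) * sinh ((1 - w) * x) := by
  have sinh_sq_le : sinh (w * x) ^ 2 ≤ w ^ 2 * sinh x ^ 2 := by
    rw [← mul_pow, sq_le_sq, abs_mul]
    exact abs_sinh_mul_le hw x
  calc (1 - w ^ 2) * sinh x ^ 2
      = sinh x ^ 2 - w ^ 2 * sinh x ^ 2 := by ring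
    _ ≤ sinh x ^ 2 - sinh (w * x) ^ 2 := by gcongr
    _ = sinh ((1 + w) * x) * sinh ((1 - w) * x) := by
      rw [← sinh_add_mul_sinh_sub, one_add_mul, one_sub_mul]

lemma rpow_two_mul_sub_one {t : ℝ} (ht : 0 < t) (a : ℝ) :
    t ^ (2 * a) - 1 = 2 * t ^ a * sinh (a * log t) := by
  have exp_mul_exp_neg : exp (a * log t) * exp (-(a * log t)) = 1 := by
    rw [← exp_add, add_neg_cancel, exp_zero]
  rw [two_mul, rpow_add ht, rpow_def_of_pos ht, mul_comm (log t), sinh_eq]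
  linear_combination exp_mul_exp_neg

lemma abs_sub_div_add_le_one {K : Type*} [Field K] [LinearOrder K] [IsStrictOrderedRing K]
    {a b : K} (hab : 0 ≤ a * b) : |(a - b) / (a + b)| ≤ 1 := by
  rw [abs_div]
  refine div_le_one_of_le₀ (sq_le_sq.1 ?_) (abs_nonneg _)
  linarith [add_sq a b, sub_sq a b]

theorem pow_product_ineq_general {t α β : ℝ} (ht : 0 < t) (hαβ : 0 ≤ α * β) (hsum : α + β ≠ 0) :
    (t ^ (2 * α) - 1) * (t ^ (2 * β) - 1) ≥
      4 * α * β / (α + β) ^ 2 * (t ^ (α + β) - 1) ^ 2 := by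
  set w := (α - β) / (α + β) with hw
  set x := (α + β) / 2 * log t with hx
  have coeff_eq : 4 * α * β / (α + β) ^ 2 = 1 - w ^ 2 := by rw [hw]; field_simp; ring
  have left_arg : (1 + w) * x = α * log t := by rw [hw, hx]; field_simp; ring
  have right_arg : (1 - w) * x = β * log t := by rw [hw, hx]; field_simp; ring
  have rpow_half_sq : (t ^ ((α + β) / 2)) ^ 2 = t ^ (α + β) := by
    rw [← rpow_mul_natCast ht.le, Nat.cast_ofNat, div_mul_cancel₀ _ two_ne_zero]
  have rpow_sum_sub_one : t ^ (α + β) - 1 = 2 * t ^ ((α + β) / 2) * sinh x := by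
    rw [← rpow_two_mul_sub_one ht, mul_div_cancel₀ _ two_ne_zero]
  calc 4 * α * β / (α + β) ^ 2 * (t ^ (α + β) - 1) ^ 2
      = 4 * t ^ (α + β) * ((1 - w ^ 2) * sinh x ^ 2) := by
        rw [coeff_eq, rpow_sum_sub_one, ← rpow_half_sq]; ring
    _ ≤ 4 * t ^ (α + β) * (sinh ((1 + w) * x) * sinh ((1 - w) * x)) := by
        have sinh_bound := one_sub_sq_mul_sinh_sq_le (abs_sub_div_add_le_one hαβ) x
        gcongr 4 * t ^ (α + β) * ?_
    _ = (t ^ (2 * α) - 1) * (t ^ (2 * β) - 1) := by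
        rw [left_arg, right_arg, rpow_two_mul_sub_one ht, rpow_two_mul_sub_one ht, rpow_add ht]
        ring

/-- For `t ≥ 1`, `α, β ≥ 0` with `α + β > 0`,
`(t^{2α} − 1)(t^{2β} − 1) ≥ (4αβ/(α+β)²)(t^{α+β} − 1)²`. -/
theorem pow_product_ineq (t α β : ℝ) (ht : 1 ≤ t) (hα : 0 ≤ α) (hβ : 0 ≤ β)
    (hαβ : 0 < α + β) :
    (t ^ (2 * α) - 1) * (t ^ (2 * β) - 1) ≥
      4 * α * β / (α + β) ^ 2 * (t ^ (α + β) - 1) ^ 2 :=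
  pow_product_ineq_general (zero_lt_one.trans_le ht) (mul_nonneg hα hβ) hαβ.ne'
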